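/- Let s ∈ (0,1), u ∈ C_c^∞(ℝⁿ), and let U be its Caffarelli–Silvestre extension. If ∫₀^∞∫_{ℝⁿ} z^{1−2s} |∇_x² U(x,z)|² dx dz < ∞, then ∫₀^∞∫_{ℝⁿ} z^{1−2s} | Δ_x( |∇̃U|² )(x,z) | dx dz < ∞, where Δ_x is the Laplacian in the x-variables, |∇̃U|² = |∇_x U|² + |∂_z U|², and |∇_x² U|² is the squared Frobenius norm of the Hessian in the x-variables. -/

import Mathlib

open MeasureTheory Filter Set
open scoped Topology ENNReal NNReal

noncomputable section

/-- `ℝⁿ` with the Euclidean norm. -/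
abbrev En (n : ℕ) := EuclideanSpace ℝ (Fin n)

/-- The normalizing constant `p(n,s) = Γ(n/2+s)/(π^{n/2} Γ(s))` of the Poisson kernel. -/
def pns (n : ℕ) (s : ℝ) : ℝ :=
  Real.Gamma ((n : ℝ) / 2 + s) / (Real.pi ^ ((n : ℝ) / 2) * Real.Gamma s)

/-- The fractional Poisson kernel `P_z^{(s)}(x) = p(n,s) z^{2s} (|x|² + z²)^{-(n+2s)/2}`. -/
def Pker (n : ℕ) (s z : ℝ) (x : En n) : ℝ :=
  pns n s * z ^ (2 * s) * (‖x‖ ^ 2 + z ^ 2) ^ (-((n : ℝ) + 2 * s) / 2)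

/-- Convolution with the fractional Poisson kernel in the first variable, at fixed `z`. -/
def Pconv (n : ℕ) (s z : ℝ) (f : En n → ℝ) (x : En n) : ℝ :=
  ∫ y, Pker n s z (x - y) * f y

/-- The Caffarelli–Silvestre extension `U(x,z) = (P_z^{(s)} ∗ u)(x)`. -/
def CSext (n : ℕ) (s : ℝ) (u : En n → ℝ) (x : En n) (z : ℝ) : ℝ :=
  Pconv n s z u x

/-- The constant `C(n,s) = 4^s Γ(n/2+s) / (π^{n/2} |Γ(-s)|)`. -/
def Cns (n : ℕ) (s : ℝ) : ℝ :=
  4 ^ s * Real.Gamma ((n : ℝ) / 2 + s) / (Real.pi ^ ((n : ℝ) / 2) * |Real.Gamma (-s)|)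

/-- The fractional Laplacian `(-Δ)^s w(x)` as a principal-value singular integral. -/
def fracLap (n : ℕ) (s : ℝ) (w : En n → ℝ) (x : En n) : ℝ :=
  Cns n s * limUnder (𝓝[>] (0 : ℝ))
    (fun ε : ℝ => ∫ y in {y : En n | ε < ‖x - y‖}, (w x - w y) / ‖x - y‖ ^ ((n : ℝ) + 2 * s))

/-- `Λ^s w := -(-Δ)^s w`. -/
def Lam (n : ℕ) (s : ℝ) (w : En n → ℝ) (x : En n) : ℝ := - fracLap n s w x

/-- The first-order carré du champ `Γ₁(u,v) = ½(Λ^s(uv) - u Λ^s v - v Λ^s u)`. -/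
def Gamma1 (n : ℕ) (s : ℝ) (u v : En n → ℝ) (x : En n) : ℝ :=
  (Lam n s (fun y => u y * v y) x - u x * Lam n s v x - v x * Lam n s u x) / 2

/-- The constant `β_s = 2^{2s-1} Γ(s)/Γ(1-s)`. -/
def betaS (s : ℝ) : ℝ := 2 ^ (2 * s - 1) * Real.Gamma s / Real.Gamma (1 - s)

/-- Partial derivative in the `i`-th coordinate direction. -/
def pd {n : ℕ} (i : Fin n) (f : En n → ℝ) (x : En n) : ℝ :=
  fderiv ℝ f x (EuclideanSpace.single i 1)

/-- The Laplacian in the `x`-variables. -/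
def lapX {n : ℕ} (f : En n → ℝ) (x : En n) : ℝ := ∑ i, pd i (pd i f) x

/-- The degenerate operator `L_s W = div_{x,z}(z^{1-2s} ∇̃W)`, written out as
`z^{1-2s} Δ_x W + ∂_z(z^{1-2s} ∂_z W)`. -/
def LsOp {n : ℕ} (s : ℝ) (W : En n → ℝ → ℝ) (x : En n) (z : ℝ) : ℝ :=
  z ^ (1 - 2 * s) * lapX (fun y => W y z) x
    + deriv (fun t => t ^ (1 - 2 * s) * deriv (W x) t) z

/-!
Expanding, `Δ_x|∇̃U|² = 2 ∑ᵢ (|∇̃∂ᵢU|² + ∇̃U · ∇̃∂ᵢ²U)`, and `∂ᵢU`, `∂ᵢ²U` are the extensions of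
`∂ᵢu`, `∂ᵢ²u`. By Cauchy–Schwarz it therefore suffices that the extension `F` of every compactly
supported `C¹` function `f` has finite energy `∫₀^∞ ∫ z^{1-2s} |∇̃F|² dx dz`.

Each component of `∇̃F` is `k_z ⋆ f` for a kernel with `∫ k_z = 0` and `|k_z| ≤ A z⁻¹ P_z`, so that
`(k_z ⋆ f)(x) = ∫ k_z(y) (f(x - y) - f(x)) dy`. As `f` is `θ`-Hölder for all `θ ∈ [0, 1]` and the
`θ`-th moment of `P_z` is a multiple of `z^θ` when `θ < 2s`, this gives
`‖k_z ⋆ f‖₂² ≤ C z^{2θ-2}`. Against the weight `z^{1-2s}`, some `θ ∈ (s, min(1, 2s))` makes this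
integrable near `0`, and `θ = 0` makes it integrable near `∞`.
-/

section PartialDerivatives

variable {n : ℕ} {f g : En n → ℝ} {x : En n} (i j : Fin n)

lemma contDiff_pd {m : ℕ∞} (hf : ContDiff ℝ (m + 1) f) : ContDiff ℝ m (pd i f) :=
  (hf.fderiv_right le_rfl).clm_apply contDiff_const

lemma hasCompactSupport_pd (hf : HasCompactSupport f) : HasCompactSupport (pd i f) :=
  hf.fderiv_apply ℝ _

lemma pd_comm (hf : ContDiff ℝ 2 f) : pd i (pd j f) = pd j (pd i f) := by
  have hdf : Differentiable ℝ (fderiv ℝ f) :=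
    (hf.fderiv_right (m := 1) (by norm_num)).differentiable one_ne_zero
  have pd_pd (i j : Fin n) (x : En n) : pd i (pd j f) x =
      fderiv ℝ (fderiv ℝ f) x (EuclideanSpace.single i 1) (EuclideanSpace.single j 1) := by
    change fderiv ℝ (fun y => fderiv ℝ f y (EuclideanSpace.single j 1)) x _ = _
    simp [fderiv_clm_apply (hdf x) (differentiableAt_const _)]
  ext x
  rw [pd_pd, pd_pd]
  exact (hf.contDiffAt.isSymmSndFDerivAt (by simp)).eq _ _

lemma pd_add (hf : Differentiable ℝ f) (hg : Differentiable ℝ g) :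
    pd i (fun y => f y + g y) = fun y => pd i f y + pd i g y := by
  ext x
  simp [pd, fderiv_fun_add (hf x) (hg x)]

lemma pd_mul (hf : Differentiable ℝ f) (hg : Differentiable ℝ g) :
    pd i (fun y => f y * g y) = fun y => f y * pd i g y + g y * pd i f y := by
  ext x
  simp [pd, fderiv_fun_mul (hf x) (hg x)]

lemma lapX_add (hf : ContDiff ℝ 2 f) (hg : ContDiff ℝ 2 g) :
    lapX (fun y => f y + g y) x = lapX f x + lapX g x := by
  have hpd {h : En n → ℝ} (hh : ContDiff ℝ 2 h) (i : Fin n) : Differentiable ℝ (pd i h) :=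
    (contDiff_pd (m := 1) i hh).differentiable (by simp)
  simp only [lapX, pd_add _ (hf.differentiable two_ne_zero) (hg.differentiable two_ne_zero),
    pd_add _ (hpd hf _) (hpd hg _), Finset.sum_add_distrib]

lemma lapX_sum {ι : Type*} (t : Finset ι) {F : ι → En n → ℝ}
    (hF : ∀ j ∈ t, ContDiff ℝ 2 (F j)) :
    lapX (fun y => ∑ j ∈ t, F j y) x = ∑ j ∈ t, lapX (F j) x := by
  classical
  induction t using Finset.induction_on with
  | empty =>
    have pd_zero (i : Fin n) : pd i (fun _ => 0) = fun _ => 0 := by ext; simp [pd]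
    simp [lapX, pd_zero]
  | insert a t ha ih =>
    rw [Finset.forall_mem_insert] at hF
    simp only [Finset.sum_insert ha, lapX_add hF.1 (ContDiff.sum hF.2), ih hF.2]

lemma lapX_sq (hf : ContDiff ℝ 2 f) :
    lapX (fun y => f y ^ 2) x = ∑ i, 2 * (pd i f x ^ 2 + f x * pd i (pd i f) x) := by
  have hf' : Differentiable ℝ f := hf.differentiable two_ne_zero
  refine Finset.sum_congr rfl fun i _ => ?_
  have hpd : Differentiable ℝ (pd i f) := (contDiff_pd (m := 1) i hf).differentiable (by simp)
  simp only [sq, pd_mul i hf' hf', pd_add i (hf'.fun_mul hpd) (hf'.fun_mul hpd), pd_mul i hf' hpd]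
  ring

lemma abs_lapX_sq_le (hf : ContDiff ℝ 2 f) :
    |lapX (fun y => f y ^ 2) x| ≤
      ∑ i, (f x ^ 2 + 2 * pd i f x ^ 2 + pd i (pd i f) x ^ 2) := by
  rw [lapX_sq hf]
  refine (Finset.abs_sum_le_sum_abs _ _).trans (Finset.sum_le_sum fun i _ => ?_)
  rw [abs_le]
  constructor <;>
    nlinarith [sq_nonneg (f x + pd i (pd i f) x), sq_nonneg (f x - pd i (pd i f) x),
      sq_nonneg (pd i f x)]

lemma abs_lapX_sum_sq_add_sq_le {ι : Type*} {t : Finset ι} {F : ι → En n → ℝ}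
    (hF : ∀ j ∈ t, ContDiff ℝ 2 (F j)) (hg : ContDiff ℝ 2 g) :
    |lapX (fun y => ∑ j ∈ t, F j y ^ 2 + g y ^ 2) x| ≤
      ∑ i, ((∑ j ∈ t, F j x ^ 2 + g x ^ 2) +
        2 * (∑ j ∈ t, pd i (F j) x ^ 2 + pd i g x ^ 2) +
        (∑ j ∈ t, pd i (pd i (F j)) x ^ 2 + pd i (pd i g) x ^ 2)) := by
  have hF2 : ∀ j ∈ t, ContDiff ℝ 2 fun y => F j y ^ 2 := fun j hj => (hF j hj).pow 2
  calc |lapX (fun y => ∑ j ∈ t, F j y ^ 2 + g y ^ 2) x|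
      = |∑ j ∈ t, lapX (fun y => F j y ^ 2) x + lapX (fun y => g y ^ 2) x| := by
        rw [lapX_add (ContDiff.sum hF2) (hg.pow 2), lapX_sum t hF2]
    _ ≤ ∑ j ∈ t, |lapX (fun y => F j y ^ 2) x| + |lapX (fun y => g y ^ 2) x| :=
        (abs_add_le _ _).trans (by gcongr; exact Finset.abs_sum_le_sum_abs _ _)
    _ ≤ ∑ j ∈ t, ∑ i, (F j x ^ 2 + 2 * pd i (F j) x ^ 2 + pd i (pd i (F j)) x ^ 2) +
          ∑ i, (g x ^ 2 + 2 * pd i g x ^ 2 + pd i (pd i g) x ^ 2) := by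
        gcongr with j hj
        · exact abs_lapX_sq_le (hF j hj)
        · exact abs_lapX_sq_le hg
    _ = _ := by
        rw [Finset.sum_comm, ← Finset.sum_add_distrib]
        refine Finset.sum_congr rfl fun i _ => ?_
        simp only [Finset.sum_add_distrib, ← Finset.mul_sum]
        ring

end PartialDerivatives

lemma memHolder_of_contDiff_of_hasCompactSupport {E : Type*} [NormedAddCommGroup E]
    [NormedSpace ℝ E] {f : E → ℝ} {θ : ℝ≥0} (hf : ContDiff ℝ 1 f) (hc : HasCompactSupport f)
    (hθ : θ ≤ 1) : MemHolder θ f := by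
  obtain ⟨L, hL⟩ := hf.lipschitzWith_of_hasCompactSupport hc one_ne_zero
  obtain ⟨M, hM⟩ :=
    Metric.isBounded_iff_nndist.1 (hc.isCompact_range hf.continuous).isBounded
  have h0 : HolderWith M 0 f := fun x y => by
    simpa only [NNReal.coe_zero, ENNReal.rpow_zero, mul_one, edist_le_coe] using
      hM (mem_range_self x) (mem_range_self y)
  exact h0.memHolder.memHolder_of_le_of_le (holderWith_one.2 hL).memHolder zero_le hθ

lemma enorm_sub_le_of_holderWith {G : Type*} [NormedAddCommGroup G] {f : G → ℝ} {H θ : ℝ≥0}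
    (hf : HolderWith H θ f) (x y : G) : ‖f (x - y) - f x‖ₑ ≤ H * ‖y‖ₑ ^ (θ : ℝ) := by
  simpa [edist_eq_enorm_sub] using hf.edist_le (x - y) x

open scoped Convolution

section MeanZeroConvolution

variable {G : Type*} [NormedAddCommGroup G] [MeasurableSpace G] [BorelSpace G]
  {μ : Measure G} {k f : G → ℝ} {H θ : ℝ≥0}

lemma lintegral_enorm_sub_le_of_holderWith [μ.IsAddLeftInvariant] (hf : HolderWith H θ f)
    (y : G) :
    ∫⁻ x, ‖f (x - y) - f x‖ₑ ∂μ ≤ 2 * μ (tsupport f) * (H * ‖y‖ₑ ^ (θ : ℝ)) := by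
  set K := tsupport f
  have hK : MeasurableSet K := (isClosed_tsupport f).measurableSet
  have pointwise (x : G) : ‖f (x - y) - f x‖ₑ ≤
      (K.indicator 1 (x - y) + K.indicator 1 x) * (H * ‖y‖ₑ ^ (θ : ℝ)) := by
    by_cases hx : x - y ∈ K ∨ x ∈ K
    · refine (enorm_sub_le_of_holderWith hf x y).trans (le_mul_of_one_le_left' ?_)
      rcases hx with hx | hx <;> simp [hx]
    · rw [not_or] at hx
      simp [image_eq_zero_of_notMem_tsupport hx.1, image_eq_zero_of_notMem_tsupport hx.2]
  have hind : Measurable (K.indicator (1 : G → ℝ≥0∞)) := measurable_one.indicator hK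
  calc ∫⁻ x, ‖f (x - y) - f x‖ₑ ∂μ
      ≤ ∫⁻ x, (K.indicator 1 (x - y) + K.indicator 1 x) * (H * ‖y‖ₑ ^ (θ : ℝ)) ∂μ :=
        lintegral_mono pointwise
    _ = 2 * μ K * (H * ‖y‖ₑ ^ (θ : ℝ)) := by
        rw [lintegral_mul_const _ (by fun_prop), lintegral_add_right _ hind,
          lintegral_sub_right_eq_self (K.indicator 1), lintegral_indicator_one hK, two_mul]

variable [SecondCountableTopology G]

lemma enorm_convolution_le_of_integral_eq_zero (hk : Integrable k μ) (hk0 : ∫ y, k y ∂μ = 0)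
    (hf : Continuous f) (hc : HasCompactSupport f) (x : G) :
    ‖(k ⋆[ContinuousLinearMap.lsmul ℝ ℝ, μ] f) x‖ₑ ≤ ∫⁻ y, ‖k y‖ₑ * ‖f (x - y) - f x‖ₑ ∂μ := by
  obtain ⟨M, hM⟩ := hc.exists_bound_of_continuous hf
  have hkf : Integrable (fun y => k y * f (x - y)) μ :=
    hk.mul_bdd (c := M) (by fun_prop) (Eventually.of_forall fun y => hM _)
  have h : (k ⋆[ContinuousLinearMap.lsmul ℝ ℝ, μ] f) x = ∫ y, k y * (f (x - y) - f x) ∂μ := by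
    simp only [mul_sub, integral_sub hkf (hk.mul_const _), integral_mul_const, hk0,
      convolution_lsmul, smul_eq_mul, zero_mul, sub_zero]
  rw [h]
  simpa only [enorm_mul] using enorm_integral_le_lintegral_enorm (μ := μ)
    fun y => k y * (f (x - y) - f x)

lemma enorm_convolution_le_of_holderWith (hk : Integrable k μ) (hk0 : ∫ y, k y ∂μ = 0)
    (hf : Continuous f) (hc : HasCompactSupport f) (hfH : HolderWith H θ f) (x : G) :
    ‖(k ⋆[ContinuousLinearMap.lsmul ℝ ℝ, μ] f) x‖ₑ ≤ H * ∫⁻ y, ‖k y‖ₑ * ‖y‖ₑ ^ (θ : ℝ) ∂μ := by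
  refine (enorm_convolution_le_of_integral_eq_zero hk hk0 hf hc x).trans ?_
  rw [← lintegral_const_mul' _ _ ENNReal.coe_ne_top]
  refine lintegral_mono fun y => ?_
  rw [mul_left_comm]
  gcongr
  exact enorm_sub_le_of_holderWith hfH x y

variable [μ.IsAddLeftInvariant] [SFinite μ]

lemma lintegral_enorm_convolution_le_of_holderWith (hk : Integrable k μ)
    (hk0 : ∫ y, k y ∂μ = 0) (hf : Continuous f) (hc : HasCompactSupport f)
    (hfH : HolderWith H θ f) :
    ∫⁻ x, ‖(k ⋆[ContinuousLinearMap.lsmul ℝ ℝ, μ] f) x‖ₑ ∂μ ≤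
      2 * μ (tsupport f) * (H * ∫⁻ y, ‖k y‖ₑ * ‖y‖ₑ ^ (θ : ℝ) ∂μ) := by
  have hkm : AEMeasurable (fun y => ‖k y‖ₑ) μ := hk.aestronglyMeasurable.enorm
  have hmoment : AEMeasurable (fun y => ‖k y‖ₑ * ‖y‖ₑ ^ (θ : ℝ)) μ := hkm.mul (by fun_prop)
  have hdiff : Continuous fun p : G × G => f (p.1 - p.2) - f p.1 := by fun_prop
  calc ∫⁻ x, ‖(k ⋆[ContinuousLinearMap.lsmul ℝ ℝ, μ] f) x‖ₑ ∂μ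
      ≤ ∫⁻ x, ∫⁻ y, ‖k y‖ₑ * ‖f (x - y) - f x‖ₑ ∂μ ∂μ :=
        lintegral_mono (enorm_convolution_le_of_integral_eq_zero hk hk0 hf hc)
    _ = ∫⁻ y, ‖k y‖ₑ * ∫⁻ x, ‖f (x - y) - f x‖ₑ ∂μ ∂μ := by
        rw [lintegral_lintegral_swap (hkm.comp_snd.mul hdiff.enorm.aemeasurable)]
        exact lintegral_congr fun y => lintegral_const_mul' _ _ enorm_ne_top
    _ ≤ ∫⁻ y, ‖k y‖ₑ * (2 * μ (tsupport f) * (H * ‖y‖ₑ ^ (θ : ℝ))) ∂μ := by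
        gcongr with y
        exact lintegral_enorm_sub_le_of_holderWith hfH y
    _ = ∫⁻ y, 2 * μ (tsupport f) * H * (‖k y‖ₑ * ‖y‖ₑ ^ (θ : ℝ)) ∂μ :=
        lintegral_congr fun y => by ring
    _ = 2 * μ (tsupport f) * (H * ∫⁻ y, ‖k y‖ₑ * ‖y‖ₑ ^ (θ : ℝ) ∂μ) := by
        rw [lintegral_const_mul'' _ hmoment, mul_assoc _ (H : ℝ≥0∞)]

lemma lintegral_enorm_convolution_sq_le_of_holderWith (hk : Integrable k μ)
    (hk0 : ∫ y, k y ∂μ = 0) (hf : Continuous f) (hc : HasCompactSupport f)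
    (hfH : HolderWith H θ f) :
    ∫⁻ x, ‖(k ⋆[ContinuousLinearMap.lsmul ℝ ℝ, μ] f) x‖ₑ ^ 2 ∂μ ≤
      2 * μ (tsupport f) * (H * ∫⁻ y, ‖k y‖ₑ * ‖y‖ₑ ^ (θ : ℝ) ∂μ) ^ 2 := by
  set m := H * ∫⁻ y, ‖k y‖ₑ * ‖y‖ₑ ^ (θ : ℝ) ∂μ
  have hcont : Continuous (k ⋆[ContinuousLinearMap.lsmul ℝ ℝ, μ] f) :=
    hc.continuous_convolution_right _ hk.locallyIntegrable hf
  calc ∫⁻ x, ‖(k ⋆[ContinuousLinearMap.lsmul ℝ ℝ, μ] f) x‖ₑ ^ 2 ∂μ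
      ≤ ∫⁻ x, m * ‖(k ⋆[ContinuousLinearMap.lsmul ℝ ℝ, μ] f) x‖ₑ ∂μ := by
        gcongr with x
        rw [sq]
        gcongr
        exact enorm_convolution_le_of_holderWith hk hk0 hf hc hfH x
    _ = m * ∫⁻ x, ‖(k ⋆[ContinuousLinearMap.lsmul ℝ ℝ, μ] f) x‖ₑ ∂μ :=
        lintegral_const_mul _ hcont.enorm.measurable
    _ ≤ m * (2 * μ (tsupport f) * m) := by
        gcongr
        exact lintegral_enorm_convolution_le_of_holderWith hk hk0 hf hc hfH
    _ = 2 * μ (tsupport f) * m ^ 2 := by ring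

end MeanZeroConvolution

section ConvolutionDerivatives

variable {n : ℕ} {k f : En n → ℝ} (i : Fin n)

lemma pd_convolution (hk : LocallyIntegrable k) (hf : ContDiff ℝ 1 f) (hc : HasCompactSupport f) :
    pd i (k ⋆ f) = k ⋆ pd i f := by
  ext x
  rw [pd, (hc.hasFDerivAt_convolution_right _ hk hf x).fderiv,
    convolution_precompR_apply _ hk (hc.fderiv ℝ) (hf.continuous_fderiv one_ne_zero)]
  rfl

lemma convolution_pd_left_eq_right (hk : ContDiff ℝ 1 k) (hf : ContDiff ℝ 1 f)
    (hc : HasCompactSupport f) : pd i k ⋆ f = k ⋆ pd i f := by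
  ext x
  set g : En n → ℝ := fun y => f (x - y)
  have hg : ContDiff ℝ 1 g := hf.comp (contDiff_const.sub contDiff_id)
  have hgc : HasCompactSupport g := hc.comp_homeomorph (Homeomorph.subLeft x)
  have hk' : Continuous (pd i k) := (contDiff_pd (m := 0) i (by simpa using hk)).continuous
  have hg' : Continuous (pd i g) := (contDiff_pd (m := 0) i (by simpa using hg)).continuous
  have pd_g (y : En n) : pd i g y = -pd i f (x - y) := by
    have hfx := (hf.differentiable one_ne_zero (x - y)).hasFDerivAt
    have hgy : HasFDerivAt g _ y := hfx.comp y ((hasFDerivAt_id y).const_sub x)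
    simp [pd, hgy.fderiv]
  have parts : ∫ y, k y * pd i g y = -∫ y, pd i k y * g y :=
    integral_mul_fderiv_eq_neg_fderiv_mul_of_integrable
      ((hk'.mul hg.continuous).integrable_of_hasCompactSupport hgc.mul_left)
      ((hk.continuous.mul hg').integrable_of_hasCompactSupport
        (hasCompactSupport_pd i hgc).mul_left)
      ((hk.continuous.mul hg.continuous).integrable_of_hasCompactSupport hgc.mul_left)
      (fun y _ => hk.differentiable one_ne_zero y) (fun y _ => hg.differentiable one_ne_zero y)
  simp only [pd_g, mul_neg, integral_neg, neg_inj] at parts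
  simpa only [convolution_lsmul, smul_eq_mul] using parts.symm

end ConvolutionDerivatives

section PoissonKernel

variable {n : ℕ} {s z : ℝ} (j : Fin n) (y : En n)

variable (n s) in
/-- The partial derivative `∂_j P_z^{(s)}` of the Poisson kernel for `z > 0`. -/
def dxPker (z : ℝ) (y : En n) : ℝ :=
  -((n + 2 * s) * y j / (‖y‖ ^ 2 + z ^ 2)) * Pker n s z y

variable (n s) in
/-- The partial derivative `∂_z P_z^{(s)}` of the Poisson kernel for `z > 0`. -/
def dzPker (z : ℝ) (y : En n) : ℝ :=
  (2 * s / z - (n + 2 * s) * z / (‖y‖ ^ 2 + z ^ 2)) * Pker n s z y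

lemma contDiff_Pker (hz : 0 < z) : ContDiff ℝ 1 (Pker n s z) :=
  contDiff_const.mul <| ((contDiff_norm_sq ℝ).add contDiff_const).rpow_const_of_ne
    fun y => by positivity

lemma continuous_Pker (hz : 0 < z) : Continuous (Pker n s z) :=
  (contDiff_Pker hz).continuous

lemma measurable_Pker : Measurable fun p : ℝ × En n => Pker n s p.1 p.2 := by
  unfold Pker
  fun_prop

lemma measurable_dxPker : Measurable fun p : ℝ × En n => dxPker n s j p.1 p.2 :=
  .mul (by fun_prop) measurable_Pker

lemma measurable_dzPker : Measurable fun p : ℝ × En n => dzPker n s p.1 p.2 :=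
  .mul (by fun_prop) measurable_Pker

lemma pd_Pker (hz : 0 < z) : pd j (Pker n s z) = dxPker n s j z := by
  ext y
  have hJ : 0 < ‖y‖ ^ 2 + z ^ 2 := by positivity
  have hP := (((hasStrictFDerivAt_norm_sq y).hasFDerivAt.add_const (z ^ 2)).rpow_const
    (p := -((n : ℝ) + 2 * s) / 2) (Or.inl hJ.ne')).const_mul (pns n s * z ^ (2 * s))
  have hP' : HasFDerivAt (Pker n s z) _ y := hP
  rw [pd, hP'.fderiv]
  simp only [dxPker, Pker, Real.rpow_sub_one hJ.ne', _root_.smul_apply, coe_innerSL_apply,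
    EuclideanSpace.inner_single_right, Real.ringHom_apply, one_mul, nsmul_eq_mul, Nat.cast_ofNat,
    smul_eq_mul]
  field_simp

lemma hasDerivAt_Pker (hz : 0 < z) : HasDerivAt (fun t => Pker n s t y) (dzPker n s z y) z := by
  have hJ : 0 < ‖y‖ ^ 2 + z ^ 2 := by positivity
  have hpow : HasDerivAt (fun t => pns n s * t ^ (2 * s)) _ z :=
    (Real.hasDerivAt_rpow_const (Or.inl hz.ne')).const_mul _
  have hsum : HasDerivAt (fun t => ‖y‖ ^ 2 + t ^ 2) _ z := (hasDerivAt_pow 2 z).const_add _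
  have hP : HasDerivAt (fun t => Pker n s t y) _ z :=
    hpow.mul (hsum.rpow_const (p := -((n : ℝ) + 2 * s) / 2) (Or.inl hJ.ne'))
  convert hP using 1
  simp only [dzPker, Pker, Real.rpow_sub_one hJ.ne', Real.rpow_sub_one hz.ne']
  field_simp
  ring

lemma abs_dxPker_le (hs : 0 < s) (hz : 0 < z) :
    |dxPker n s j z y| ≤ (n + 4 * s) * z⁻¹ * |Pker n s z y| := by
  have hJ : 0 < ‖y‖ ^ 2 + z ^ 2 := by positivity
  have hy : |y j| ≤ ‖y‖ := PiLp.norm_apply_le y j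
  rw [dxPker, abs_mul, abs_neg, abs_div, abs_mul, abs_of_pos hJ,
    abs_of_nonneg (by positivity : 0 ≤ (n : ℝ) + 2 * s)]
  gcongr
  rw [div_le_iff₀ hJ, mul_assoc (n + 4 * s), inv_mul_eq_div]
  gcongr
  · linarith
  · rw [le_div_iff₀ hz]
    nlinarith [sq_nonneg (‖y‖ - z), norm_nonneg y]

lemma abs_dzPker_le (hs : 0 < s) (hz : 0 < z) :
    |dzPker n s z y| ≤ (n + 4 * s) * z⁻¹ * |Pker n s z y| := by
  have hJ : 0 < ‖y‖ ^ 2 + z ^ 2 := by positivity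
  have h : z / (‖y‖ ^ 2 + z ^ 2) ≤ z⁻¹ := by
    rw [div_le_iff₀ hJ, inv_mul_eq_div, le_div_iff₀ hz]
    nlinarith [sq_nonneg ‖y‖]
  rw [dzPker, abs_mul]
  gcongr
  calc |2 * s / z - (n + 2 * s) * z / (‖y‖ ^ 2 + z ^ 2)|
      ≤ |2 * s / z| + |(n + 2 * s) * z / (‖y‖ ^ 2 + z ^ 2)| := abs_sub _ _
    _ = 2 * s * z⁻¹ + (n + 2 * s) * (z / (‖y‖ ^ 2 + z ^ 2)) := by
        rw [abs_of_pos (by positivity), abs_of_nonneg (by positivity)]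
        ring
    _ ≤ 2 * s * z⁻¹ + (n + 2 * s) * z⁻¹ := by gcongr
    _ = (n + 4 * s) * z⁻¹ := by ring

lemma Pker_eq_smul (hz : 0 < z) : Pker n s z y = (z ^ n)⁻¹ * Pker n s 1 (z⁻¹ • y) := by
  have hJ : ‖y‖ ^ 2 + z ^ 2 = z ^ 2 * (‖z⁻¹ • y‖ ^ 2 + 1 ^ 2) := by
    rw [norm_smul, Real.norm_of_nonneg (inv_pos.2 hz).le]
    field_simp
  have hpow : z ^ (2 * s) * (z ^ 2) ^ (-((n : ℝ) + 2 * s) / 2) = (z ^ n)⁻¹ := by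
    rw [← Real.rpow_natCast z 2, ← Real.rpow_mul hz.le, ← Real.rpow_add hz, ← Real.rpow_natCast,
      ← Real.rpow_neg hz.le]
    congr 1
    push_cast
    ring
  rw [Pker, Pker, hJ, Real.mul_rpow (by positivity) (by positivity), ← hpow, Real.one_rpow]
  ring

lemma integrable_Pker_one_mul_norm_rpow {θ : ℝ} (hθ : 0 ≤ θ) (hθs : θ < 2 * s) :
    Integrable fun y : En n => Pker n s 1 y * ‖y‖ ^ θ := by
  have hint : Integrable fun y : En n => (1 + ‖y‖ ^ 2) ^ (-((n : ℝ) + 2 * s - θ) / 2) :=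
    integrable_rpow_neg_one_add_norm_sq (by simp; linarith)
  refine (hint.const_mul |pns n s|).mono' ((continuous_Pker one_pos).mul
    (continuous_norm.rpow_const fun y => Or.inr hθ)).aestronglyMeasurable
    (Eventually.of_forall fun y => ?_)
  have hJ : 0 < 1 + ‖y‖ ^ 2 := by positivity
  have hnorm : ‖y‖ ^ θ ≤ (1 + ‖y‖ ^ 2) ^ (θ / 2) := by
    rw [show ‖y‖ ^ θ = (‖y‖ ^ 2) ^ (θ / 2) by
      rw [← Real.rpow_natCast_mul (norm_nonneg y)]; congr 1; push_cast; ring]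
    gcongr
    linarith
  calc ‖Pker n s 1 y * ‖y‖ ^ θ‖
      = |pns n s| * ((1 + ‖y‖ ^ 2) ^ (-((n : ℝ) + 2 * s) / 2) * ‖y‖ ^ θ) := by
        rw [Pker, Real.one_rpow, mul_one, one_pow, add_comm, norm_mul, norm_mul, mul_assoc,
          Real.norm_of_nonneg (Real.rpow_nonneg hJ.le _),
          Real.norm_of_nonneg (Real.rpow_nonneg (norm_nonneg y) θ), Real.norm_eq_abs]
    _ ≤ |pns n s| * ((1 + ‖y‖ ^ 2) ^ (-((n : ℝ) + 2 * s) / 2) * (1 + ‖y‖ ^ 2) ^ (θ / 2)) := by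
        gcongr
    _ = |pns n s| * (1 + ‖y‖ ^ 2) ^ (-((n : ℝ) + 2 * s - θ) / 2) := by
        rw [← Real.rpow_add hJ]
        ring_nf

lemma integrable_Pker (hs : 0 < s) (hz : 0 < z) : Integrable (Pker n s z) := by
  have h := (integrable_Pker_one_mul_norm_rpow (n := n) le_rfl (by positivity : 0 < 2 * s))
  simp only [Real.rpow_zero, mul_one] at h
  exact ((h.comp_smul (inv_ne_zero hz.ne')).const_mul (z ^ n)⁻¹).congr
    (Eventually.of_forall fun y => (Pker_eq_smul y hz).symm)

lemma integral_Pker (hz : 0 < z) : ∫ y, Pker n s z y = ∫ y, Pker n s 1 y := by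
  simp_rw [Pker_eq_smul _ hz]
  rw [integral_const_mul, Measure.integral_comp_inv_smul_of_nonneg _ _ hz.le]
  simp [hz.ne']

lemma abs_Pker_le_of_le (hs : 0 < s) {w : ℝ} (hw : 0 < w) (hwz : w ≤ z) :
    |Pker n s z y| ≤ (z / w) ^ (2 * s) * |Pker n s w y| := by
  have hz : 0 < z := hw.trans_le hwz
  have abs_Pker {t : ℝ} (ht : 0 < t) : |Pker n s t y| =
      |pns n s| * t ^ (2 * s) * (‖y‖ ^ 2 + t ^ 2) ^ (-((n : ℝ) + 2 * s) / 2) := by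
    rw [Pker, abs_mul, abs_mul, abs_of_pos (Real.rpow_pos_of_pos ht _),
      abs_of_pos (Real.rpow_pos_of_pos (by positivity) _)]
  have hexp : -((n : ℝ) + 2 * s) / 2 ≤ 0 := by
    have : 0 ≤ (n : ℝ) + 2 * s := by positivity
    linarith
  have hJ : (‖y‖ ^ 2 + z ^ 2) ^ (-((n : ℝ) + 2 * s) / 2) ≤
      (‖y‖ ^ 2 + w ^ 2) ^ (-((n : ℝ) + 2 * s) / 2) :=
    Real.rpow_le_rpow_of_nonpos (by positivity) (by gcongr) hexp
  rw [abs_Pker hz, abs_Pker hw, Real.div_rpow hz.le hw.le]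
  calc _ ≤ |pns n s| * z ^ (2 * s) * (‖y‖ ^ 2 + w ^ 2) ^ (-((n : ℝ) + 2 * s) / 2) := by gcongr
    _ = _ := by field_simp

lemma hasDerivAt_integral_Pker_mul (hs : 0 < s) (hz : 0 < z) {g : En n → ℝ} (hg : Continuous g)
    {M : ℝ} (hM : ∀ y, ‖g y‖ ≤ M) :
    HasDerivAt (fun t => ∫ y, Pker n s t y * g y) (∫ y, dzPker n s z y * g y) z := by
  have hw : 0 < z / 2 := by positivity
  have dominated (y : En n) (t : ℝ) (ht : t ∈ Ioo (z / 2) (2 * z)) :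
      ‖dzPker n s t y * g y‖ ≤
        (n + 4 * s) * (z / 2)⁻¹ * 4 ^ (2 * s) * |Pker n s (z / 2) y| * M := by
    have ht0 : 0 < t := hw.trans ht.1
    rw [norm_mul, Real.norm_eq_abs, mul_assoc (_ * _) (4 ^ (2 * s))]
    gcongr
    · refine (abs_dzPker_le y hs ht0).trans ?_
      gcongr
      · exact ht.1.le
      · refine (abs_Pker_le_of_le y hs hw ht.1.le).trans ?_
        gcongr
        rw [div_le_iff₀ hw]
        linarith [ht.2]
    · exact hM y
  have hmeas {t : ℝ} (k : ℝ → En n → ℝ) (hk : Measurable fun p : ℝ × En n => k p.1 p.2) :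
      AEStronglyMeasurable (fun y => k t y * g y) :=
    ((hk.comp measurable_prodMk_left).mul hg.measurable).aestronglyMeasurable
  refine (hasDerivAt_integral_of_dominated_loc_of_deriv_le
    (F := fun t y => Pker n s t y * g y) (F' := fun t y => dzPker n s t y * g y)
    (Ioo_mem_nhds (half_lt_self hz) (by linarith : z < 2 * z))
    (Eventually.of_forall fun t => hmeas (Pker n s) measurable_Pker)
    ((integrable_Pker hs hz).mul_bdd hg.aestronglyMeasurable (Eventually.of_forall hM))
    (hmeas (dzPker n s) measurable_dzPker) (Eventually.of_forall dominated)
    (((integrable_Pker hs hw).abs.const_mul _).mul_const _)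
    (Eventually.of_forall fun y t ht => ?_)).2
  exact (hasDerivAt_Pker y (hw.trans ht.1)).mul_const _

lemma integral_dxPker : ∫ y, dxPker n s j z y = 0 := by
  have hodd : ∫ y, dxPker n s j z (-y) = -∫ y, dxPker n s j z y := by
    rw [← integral_neg]
    congr 1 with y
    simp [dxPker, Pker, neg_div]
  rw [integral_neg_eq_self] at hodd
  linarith

lemma integral_dzPker (hs : 0 < s) (hz : 0 < z) : ∫ y, dzPker n s z y = 0 := by
  have h := hasDerivAt_integral_Pker_mul (n := n) hs hz (g := fun _ => 1) continuous_const
    (fun _ => norm_one.le)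
  simp only [mul_one] at h
  refine h.unique ((hasDerivAt_const z (∫ y, Pker n s 1 y)).congr_of_eventuallyEq ?_)
  filter_upwards [Ioi_mem_nhds hz] with t ht using integral_Pker ht

lemma lintegral_enorm_Pker_mul_norm_rpow (hz : 0 < z) {θ : ℝ} (hθ : 0 ≤ θ) (hθs : θ < 2 * s) :
    ∫⁻ y, ‖Pker n s z y * ‖y‖ ^ θ‖ₑ =
      ENNReal.ofReal (z ^ θ * ∫ y, ‖Pker n s 1 y * ‖y‖ ^ θ‖) := by
  set h : En n → ℝ := fun y => Pker n s 1 y * ‖y‖ ^ θ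
  have hint : Integrable h := integrable_Pker_one_mul_norm_rpow hθ hθs
  have scaling (y : En n) : Pker n s z y * ‖y‖ ^ θ = z ^ θ * (z ^ n)⁻¹ * h (z⁻¹ • y) := by
    simp only [h]
    rw [Pker_eq_smul y hz, norm_smul, Real.mul_rpow (norm_nonneg _) (norm_nonneg _),
      Real.norm_of_nonneg (inv_pos.2 hz).le, Real.inv_rpow hz.le]
    field_simp
  simp_rw [scaling]
  rw [← ofReal_integral_norm_eq_lintegral_enorm
    ((hint.comp_smul (inv_ne_zero hz.ne')).const_mul _)]
  congr 1
  simp_rw [norm_mul (z ^ θ * (z ^ n)⁻¹)]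
  rw [integral_const_mul, Measure.integral_comp_inv_smul_of_nonneg _ (fun y => ‖h y‖) hz.le,
    Real.norm_of_nonneg (by positivity)]
  simp only [finrank_euclideanSpace, Fintype.card_fin, smul_eq_mul]
  field_simp
  rfl

end PoissonKernel

lemma setLIntegral_Ioi_lt_top_of_le_rpow {g : ℝ → ℝ≥0∞} {C₀ C₁ : ℝ≥0} {a b : ℝ} (ha : -1 < a)
    (hb : b < -1) (h0 : ∀ z ∈ Ioo (0 : ℝ) 1, g z ≤ C₀ * ENNReal.ofReal (z ^ a))
    (h1 : ∀ z ∈ Ici (1 : ℝ), g z ≤ C₁ * ENNReal.ofReal (z ^ b)) :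
    ∫⁻ z in Ioi 0, g z < ⊤ := by
  have finite_of_le {S : Set ℝ} {C : ℝ≥0} {c : ℝ} (hS : MeasurableSet S)
      (hg : ∀ z ∈ S, g z ≤ C * ENNReal.ofReal (z ^ c))
      (hc : IntegrableOn (fun z : ℝ => z ^ c) S) : ∫⁻ z in S, g z < ⊤ := by
    refine (setLIntegral_mono' hS hg).trans_lt ?_
    rw [lintegral_const_mul' _ _ ENNReal.coe_ne_top]
    exact ENNReal.mul_lt_top ENNReal.coe_lt_top hc.lintegral_lt_top
  rw [← Ioo_union_Ici_eq_Ioi (zero_lt_one' ℝ)]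
  refine (lintegral_union_le _ _ _).trans_lt (ENNReal.add_lt_top.2
    ⟨finite_of_le measurableSet_Ioo h0 ?_, finite_of_le measurableSet_Ici h1 ?_⟩)
  · exact (intervalIntegral.integrableOn_Ioo_rpow_iff one_pos).2 ha
  · exact (integrableOn_Ici_iff_integrableOn_Ioi).2 (integrableOn_Ioi_rpow_of_lt hb one_pos)

section GradientKernel

/-- A one-parameter family of kernels with the size and cancellation of the first derivatives of
the Poisson kernel: `|k_z| ≤ A z⁻¹ |P_z^{(s)}|` and `∫ k_z = 0` for `z > 0`. -/
structure IsGradientKernel {n : ℕ} (s : ℝ) (k : ℝ → En n → ℝ) : Prop where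
  measurable : Measurable fun p : ℝ × En n => k p.1 p.2
  integral_eq_zero : ∀ z, 0 < z → ∫ y, k z y = 0
  exists_bound : ∃ A : ℝ, ∀ z, 0 < z → ∀ y, |k z y| ≤ A * z⁻¹ * |Pker n s z y|

variable {n : ℕ} {s z : ℝ} {k : ℝ → En n → ℝ} {f : En n → ℝ}

lemma isGradientKernel_dxPker (hs : 0 < s) (j : Fin n) : IsGradientKernel s (dxPker n s j) where
  measurable := measurable_dxPker j
  integral_eq_zero _ _ := integral_dxPker j
  exists_bound := ⟨n + 4 * s, fun _ hz y => abs_dxPker_le j y hs hz⟩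

lemma isGradientKernel_dzPker (hs : 0 < s) : IsGradientKernel s (dzPker n s) where
  measurable := measurable_dzPker
  integral_eq_zero _ hz := integral_dzPker hs hz
  exists_bound := ⟨n + 4 * s, fun _ hz y => abs_dzPker_le y hs hz⟩

namespace IsGradientKernel

lemma integrable (hk : IsGradientKernel s k) (hs : 0 < s) (hz : 0 < z) : Integrable (k z) := by
  obtain ⟨A, hA⟩ := hk.exists_bound
  exact ((integrable_Pker hs hz).abs.const_mul (A * z⁻¹)).mono'
    (hk.measurable.comp measurable_prodMk_left).aestronglyMeasurable
    (Eventually.of_forall (hA z hz))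

lemma exists_lintegral_enorm_mul_rpow_le (hk : IsGradientKernel s k) {θ : ℝ≥0}
    (hθs : θ < 2 * s) :
    ∃ M : ℝ≥0, ∀ z, 0 < z →
      ∫⁻ y, ‖k z y‖ₑ * ‖y‖ₑ ^ (θ : ℝ) ≤ M * ENNReal.ofReal (z ^ (θ - 1 : ℝ)) := by
  obtain ⟨A, hA⟩ := hk.exists_bound
  set I := ∫ y : En n, ‖Pker n s 1 y * ‖y‖ ^ (θ : ℝ)‖
  refine ⟨A.toNNReal * I.toNNReal, fun z hz => ?_⟩
  have pointwise (y : En n) : ‖k z y‖ₑ * ‖y‖ₑ ^ (θ : ℝ) ≤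
      ENNReal.ofReal (A * z⁻¹) * ‖Pker n s z y * ‖y‖ ^ (θ : ℝ)‖ₑ := by
    rw [enorm_mul, Real.enorm_rpow_of_nonneg (norm_nonneg y) θ.coe_nonneg, enorm_norm, ← mul_assoc]
    gcongr
    rw [Real.enorm_eq_ofReal_abs, Real.enorm_eq_ofReal_abs, ← ENNReal.ofReal_mul' (abs_nonneg _)]
    exact ENNReal.ofReal_le_ofReal (hA z hz y)
  calc ∫⁻ y, ‖k z y‖ₑ * ‖y‖ₑ ^ (θ : ℝ)
      ≤ ∫⁻ y, ENNReal.ofReal (A * z⁻¹) * ‖Pker n s z y * ‖y‖ ^ (θ : ℝ)‖ₑ :=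
        lintegral_mono pointwise
    _ = ENNReal.ofReal (A * z⁻¹) * ENNReal.ofReal (z ^ (θ : ℝ) * I) := by
        rw [lintegral_const_mul' _ _ ENNReal.ofReal_ne_top,
          lintegral_enorm_Pker_mul_norm_rpow hz θ.coe_nonneg hθs]
    _ = (A.toNNReal * I.toNNReal : ℝ≥0) * ENNReal.ofReal (z ^ (θ - 1 : ℝ)) := by
        rw [ENNReal.ofReal_mul' (inv_nonneg.2 hz.le), ENNReal.ofReal_mul (by positivity),
          Real.rpow_sub_one hz.ne', div_eq_mul_inv, ENNReal.ofReal_mul (by positivity),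
          ENNReal.coe_mul]
        simp only [ENNReal.ofReal]
        ring

lemma exists_lintegral_enorm_convolution_sq_le (hk : IsGradientKernel s k) (hs : 0 < s)
    (hf : ContDiff ℝ 1 f) (hc : HasCompactSupport f) {θ : ℝ≥0} (hθ : θ ≤ 1) (hθs : θ < 2 * s) :
    ∃ C : ℝ≥0, ∀ z, 0 < z →
      ∫⁻ x, ‖(k z ⋆ f) x‖ₑ ^ 2 ≤ C * ENNReal.ofReal (z ^ (2 * θ - 2 : ℝ)) := by
  obtain ⟨H, hH⟩ := memHolder_of_contDiff_of_hasCompactSupport hf hc hθ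
  obtain ⟨M, hM⟩ := hk.exists_lintegral_enorm_mul_rpow_le hθs
  lift volume (tsupport f) to ℝ≥0 using hc.isCompact.measure_lt_top.ne with V hV
  refine ⟨2 * V * (H * M) ^ 2, fun z hz => ?_⟩
  calc ∫⁻ x, ‖(k z ⋆ f) x‖ₑ ^ 2
      ≤ 2 * V * (H * ∫⁻ y, ‖k z y‖ₑ * ‖y‖ₑ ^ (θ : ℝ)) ^ 2 :=
        hV ▸ lintegral_enorm_convolution_sq_le_of_holderWith (hk.integrable hs hz)
          (hk.integral_eq_zero z hz) hf.continuous hc hH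
    _ ≤ 2 * V * (H * (M * ENNReal.ofReal (z ^ (θ - 1 : ℝ)))) ^ 2 := by
        gcongr
        exact hM z hz
    _ = (2 * V * (H * M) ^ 2 : ℝ≥0) * ENNReal.ofReal (z ^ (2 * θ - 2 : ℝ)) := by
        rw [show (2 * θ - 2 : ℝ) = (θ - 1) * (2 : ℕ) by push_cast; ring,
          Real.rpow_mul_natCast hz.le, ENNReal.ofReal_pow (by positivity)]
        push_cast
        ring

lemma measurable_convolution (hk : IsGradientKernel s k) (hf : Measurable f) :
    Measurable fun p : En n × ℝ => (k p.2 ⋆ f) p.1 := by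
  have h : Measurable fun q : (En n × ℝ) × En n => k q.1.2 q.2 * f (q.1.1 - q.2) :=
    (hk.measurable.comp (by fun_prop : Measurable fun q : (En n × ℝ) × En n => (q.1.2, q.2))).mul
      (by fun_prop)
  simpa only [convolution_lsmul, smul_eq_mul] using
    h.stronglyMeasurable.integral_prod_right'.measurable

lemma setLIntegral_rpow_mul_lintegral_enorm_convolution_sq_lt_top (hk : IsGradientKernel s k)
    (hs0 : 0 < s) (hs1 : s < 1) (hf : ContDiff ℝ 1 f) (hc : HasCompactSupport f) :
    ∫⁻ z in Ioi 0, ENNReal.ofReal (z ^ (1 - 2 * s)) * ∫⁻ x, ‖(k z ⋆ f) x‖ₑ ^ 2 < ⊤ := by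
  have weighted {θ : ℝ≥0} (hθ : θ ≤ 1) (hθs : θ < 2 * s) :
      ∃ C : ℝ≥0, ∀ z : ℝ, 0 < z →
        ENNReal.ofReal (z ^ (1 - 2 * s)) * ∫⁻ x, ‖(k z ⋆ f) x‖ₑ ^ 2 ≤
          C * ENNReal.ofReal (z ^ (2 * θ - 2 * s - 1 : ℝ)) := by
    obtain ⟨C, hC⟩ := hk.exists_lintegral_enorm_convolution_sq_le hs0 hf hc hθ hθs
    refine ⟨C, fun z hz => (mul_le_mul_right (hC z hz) _).trans_eq ?_⟩
    rw [mul_left_comm, ← ENNReal.ofReal_mul (by positivity), ← Real.rpow_add hz]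
    congr 3
    ring
  obtain ⟨θ, hsθ, hθ⟩ : ∃ θ, s < θ ∧ θ < min 1 (2 * s) :=
    exists_between (lt_min hs1 (by linarith))
  lift θ to ℝ≥0 using (hs0.trans hsθ).le
  obtain ⟨hθ1, hθs⟩ := lt_min_iff.1 hθ
  obtain ⟨C₀, hC₀⟩ := weighted (mod_cast hθ1.le) hθs
  obtain ⟨C₁, hC₁⟩ := weighted zero_le_one (by simpa using hs0)
  exact setLIntegral_Ioi_lt_top_of_le_rpow (by linarith) (by push_cast; linarith)
    (fun z hz => hC₀ z hz.1) (fun z hz => hC₁ z (zero_lt_one.trans_le hz))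

lemma integrableOn_convolution_sq (hk : IsGradientKernel s k) (hs0 : 0 < s) (hs1 : s < 1)
    (hf : ContDiff ℝ 1 f) (hc : HasCompactSupport f) :
    IntegrableOn (fun p : En n × ℝ => p.2 ^ (1 - 2 * s) * (k p.2 ⋆ f) p.1 ^ 2)
      (univ ×ˢ Ioi 0) := by
  have hm := hk.measurable_convolution hf.continuous.measurable
  have hm' : Measurable fun p : En n × ℝ => p.2 ^ (1 - 2 * s) * (k p.2 ⋆ f) p.1 ^ 2 := by
    fun_prop
  refine ⟨hm'.aestronglyMeasurable, ?_⟩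
  rw [HasFiniteIntegral, Measure.volume_eq_prod, ← Measure.prod_restrict, Measure.restrict_univ,
    lintegral_prod_symm _ hm'.enorm.aemeasurable]
  refine (setLIntegral_congr_fun measurableSet_Ioi fun z hz => ?_).trans_lt
    (hk.setLIntegral_rpow_mul_lintegral_enorm_convolution_sq_lt_top hs0 hs1 hf hc)
  simp only [enorm_mul, enorm_pow]
  rw [lintegral_const_mul' _ _ enorm_ne_top, Real.enorm_of_nonneg (Real.rpow_nonneg hz.le _)]

end IsGradientKernel

end GradientKernel

section Extension

/-- The full gradient density `|∇̃W|² = |∇_x W|² + |∂_z W|²` at `(x, z)`. -/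
def gradSq {n : ℕ} (W : En n → ℝ → ℝ) (x : En n) (z : ℝ) : ℝ :=
  (∑ i, (pd i (fun y => W y z) x) ^ 2) + (deriv (W x) z) ^ 2

variable {n : ℕ} {s z : ℝ} {f : En n → ℝ} (i : Fin n)

lemma CSext_eq_convolution : (fun y => CSext n s f y z) = Pker n s z ⋆ f := by
  ext x
  rw [convolution_lsmul_swap]
  rfl

lemma deriv_CSext_eq_convolution (hs : 0 < s) (hz : 0 < z) (hf : Continuous f)
    (hc : HasCompactSupport f) :
    (fun y => deriv (CSext n s f y) z) = dzPker n s z ⋆ f := by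
  ext x
  obtain ⟨M, hM⟩ := hc.exists_bound_of_continuous hf
  have h := hasDerivAt_integral_Pker_mul hs hz (g := fun y => f (x - y)) (by fun_prop)
    fun y => hM _
  have hext : CSext n s f x = fun t => ∫ y, Pker n s t y * f (x - y) := by
    ext t
    simpa only [convolution_lsmul, smul_eq_mul] using
      congr_fun (CSext_eq_convolution (s := s) (z := t) (f := f)) x
  rw [hext, h.deriv]
  simp only [convolution_lsmul, smul_eq_mul]

lemma pd_CSext (hz : 0 < z) (hf : ContDiff ℝ 1 f) (hc : HasCompactSupport f) :
    pd i (fun y => CSext n s f y z) = fun y => CSext n s (pd i f) y z := by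
  rw [CSext_eq_convolution, CSext_eq_convolution,
    pd_convolution i (continuous_Pker hz).locallyIntegrable hf hc]

lemma pd_CSext_eq_convolution (hz : 0 < z) (hf : ContDiff ℝ 1 f) (hc : HasCompactSupport f) :
    pd i (fun y => CSext n s f y z) = dxPker n s i z ⋆ f := by
  rw [pd_CSext i hz hf hc, CSext_eq_convolution,
    ← convolution_pd_left_eq_right i (contDiff_Pker hz) hf hc, pd_Pker i hz]

lemma pd_deriv_CSext (hs : 0 < s) (hz : 0 < z) (hf : ContDiff ℝ 1 f) (hc : HasCompactSupport f) :
    pd i (fun y => deriv (CSext n s f y) z) = fun y => deriv (CSext n s (pd i f) y) z := by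
  have hpd : ContDiff ℝ 0 (pd i f) := contDiff_pd (m := 0) i (by simpa using hf)
  rw [deriv_CSext_eq_convolution hs hz hf.continuous hc,
    deriv_CSext_eq_convolution hs hz hpd.continuous (hasCompactSupport_pd i hc),
    pd_convolution i ((isGradientKernel_dzPker hs).integrable hs hz).locallyIntegrable hf hc]

lemma contDiff_CSext {m : ℕ∞} (hz : 0 < z) (hf : ContDiff ℝ m f) (hc : HasCompactSupport f) :
    ContDiff ℝ m fun y => CSext n s f y z := by
  rw [CSext_eq_convolution]
  exact hc.contDiff_convolution_right _ (continuous_Pker hz).locallyIntegrable hf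

lemma contDiff_deriv_CSext {m : ℕ∞} (hs : 0 < s) (hz : 0 < z) (hf : ContDiff ℝ m f)
    (hc : HasCompactSupport f) : ContDiff ℝ m fun y => deriv (CSext n s f y) z := by
  rw [deriv_CSext_eq_convolution hs hz hf.continuous hc]
  exact hc.contDiff_convolution_right _
    ((isGradientKernel_dzPker hs).integrable hs hz).locallyIntegrable hf

lemma integrableOn_gradSq_CSext (hs0 : 0 < s) (hs1 : s < 1) (hf : ContDiff ℝ 1 f)
    (hc : HasCompactSupport f) :
    IntegrableOn (fun p : En n × ℝ => p.2 ^ (1 - 2 * s) * gradSq (CSext n s f) p.1 p.2)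
      (univ ×ˢ Ioi 0) := by
  have hsum := (integrable_finsetSum Finset.univ fun i _ =>
    (isGradientKernel_dxPker hs0 i).integrableOn_convolution_sq hs0 hs1 hf hc).add
    ((isGradientKernel_dzPker hs0).integrableOn_convolution_sq hs0 hs1 hf hc)
  refine IntegrableOn.congr_fun hsum (fun p hp => ?_) (MeasurableSet.univ.prod measurableSet_Ioi)
  have hderiv := congr_fun (deriv_CSext_eq_convolution hs0 hp.2 hf.continuous hc) p.1
  simp only [gradSq, pd_CSext_eq_convolution _ hp.2 hf hc, hderiv, Pi.add_apply, mul_add,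
    Finset.mul_sum]

lemma pd_pd_CSext (j : Fin n) (hz : 0 < z) (hf : ContDiff ℝ 2 f) (hc : HasCompactSupport f) :
    pd i (pd j fun y => CSext n s f y z) = pd j fun y => CSext n s (pd i f) y z := by
  rw [pd_comm i j (contDiff_CSext (m := 2) hz hf hc), pd_CSext i hz (hf.of_le one_le_two) hc]

lemma abs_lapX_gradSq_CSext_le (hs : 0 < s) (hz : 0 < z) (hf : ContDiff ℝ 3 f)
    (hc : HasCompactSupport f) (x : En n) :
    |lapX (fun y => gradSq (CSext n s f) y z) x| ≤
      ∑ i, (gradSq (CSext n s f) x z + 2 * gradSq (CSext n s (pd i f)) x z +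
        gradSq (CSext n s (pd i (pd i f))) x z) := by
  have hf2 : ContDiff ℝ 2 f := hf.of_le (by norm_num)
  have hpd (i : Fin n) : ContDiff ℝ 2 (pd i f) := contDiff_pd (m := 2) i hf
  have hpdc (i : Fin n) : HasCompactSupport (pd i f) := hasCompactSupport_pd i hc
  set V : Fin n → En n → ℝ := fun j => pd j fun y => CSext n s f y z
  set W : En n → ℝ := fun y => deriv (CSext n s f y) z
  have contDiff_V (j : Fin n) : ContDiff ℝ 2 (V j) :=
    contDiff_pd (m := 2) j (contDiff_CSext (m := 3) hz hf hc)
  have contDiff_W : ContDiff ℝ 2 W := contDiff_deriv_CSext (m := 2) hs hz hf2 hc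
  have pd_V (i j : Fin n) : pd i (V j) = pd j fun y => CSext n s (pd i f) y z :=
    pd_pd_CSext i j hz hf2 hc
  have pd_W (i : Fin n) : pd i W = fun y => deriv (CSext n s (pd i f) y) z :=
    pd_deriv_CSext i hs hz (hf2.of_le one_le_two) hc
  have h := abs_lapX_sum_sq_add_sq_le (x := x) (t := Finset.univ) (fun j _ => contDiff_V j)
    contDiff_W
  simp only [pd_V, pd_W, pd_pd_CSext _ _ hz (hpd _) (hpdc _),
    pd_deriv_CSext _ hs hz ((hpd _).of_le one_le_two) (hpdc _)] at h
  exact h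

end Extension

theorem laplacian_gradsq_L1_general (n : ℕ) (s : ℝ) (hs0 : 0 < s) (hs1 : s < 1) (u : En n → ℝ)
    (hu : ContDiff ℝ 3 u) (huc : HasCompactSupport u) :
    ∫⁻ p in (univ : Set (En n)) ×ˢ Ioi (0 : ℝ),
      ENNReal.ofReal
        (p.2 ^ (1 - 2 * s) * |lapX (fun y => gradSq (CSext n s u) y p.2) p.1|) < ⊤ := by
  have hpd (i : Fin n) : ContDiff ℝ 2 (pd i u) := contDiff_pd (m := 2) i hu
  have hpdc (i : Fin n) : HasCompactSupport (pd i u) := hasCompactSupport_pd i huc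
  have energy {f : En n → ℝ} (hf : ContDiff ℝ 1 f) (hc : HasCompactSupport f) :=
    integrableOn_gradSq_CSext hs0 hs1 hf hc
  have hbound := integrable_finsetSum Finset.univ fun i _ =>
    ((energy (hu.of_le (by norm_num)) huc).add
      ((energy ((hpd i).of_le (by norm_num)) (hpdc i)).const_mul 2)).add
    (energy (contDiff_pd (m := 1) i (hpd i)) (hasCompactSupport_pd i (hpdc i)))
  refine (setLIntegral_mono' (MeasurableSet.univ.prod measurableSet_Ioi) fun p hp =>
    ENNReal.ofReal_le_ofReal ?_).trans_lt hbound.lintegral_lt_top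
  refine (mul_le_mul_of_nonneg_left (abs_lapX_gradSq_CSext_le hs0 hp.2 hu huc p.1)
    (Real.rpow_nonneg (le_of_lt hp.2) _)).trans_eq ?_
  simp only [Finset.mul_sum, Pi.add_apply]
  exact Finset.sum_congr rfl fun i _ => by ring

/-- **`L¹` bound for `Δ_x(|∇̃U|²)`** (Appendix Lemma, Euclidean case): if the weighted Hessian
energy is finite, then `∫₀^∞ ∫ z^{1-2s} |Δ_x(|∇̃U|²)| dx dz < ∞`. -/
theorem laplacian_gradsq_L1 (n : ℕ) (hn : 1 ≤ n) (s : ℝ) (hs0 : 0 < s) (hs1 : s < 1)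
    (u : En n → ℝ) (hu : ContDiff ℝ (⊤ : ℕ∞) u) (huc : HasCompactSupport u)
    (hhess : ∫⁻ p in (univ : Set (En n)) ×ˢ Ioi (0 : ℝ),
      ENNReal.ofReal
        (p.2 ^ (1 - 2 * s) *
          ∑ i, ∑ j, (pd i (pd j (fun y => CSext n s u y p.2)) p.1) ^ 2) < ⊤) :
    ∫⁻ p in (univ : Set (En n)) ×ˢ Ioi (0 : ℝ),
      ENNReal.ofReal
        (p.2 ^ (1 - 2 * s) *
          |lapX (fun y =>
              (∑ i, (pd i (fun y' => CSext n s u y' p.2) y) ^ 2)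
                + (deriv (CSext n s u y) p.2) ^ 2) p.1|) < ⊤ := by
  exact laplacian_gradsq_L1_general n s hs0 hs1 u (hu.of_le (WithTop.coe_le_coe.2 le_top)) huc
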